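/- Let p, q ∈ ℂ with q ≠ 1 and p ≠ 1. Suppose φ, ψ ∈ ℂ with φ ≠ ψ satisfy the period-two equations for Eq.(8): p + q ψ + φ ≠ 0, p + q φ + ψ ≠ 0, φ = φ/(p + q ψ + φ) and ψ = ψ/(p + q φ + ψ). Then {φ, ψ} = {0, 1 − p} and p + q(1−p) ≠ 0. Conversely, if p + q(1−p) ≠ 0 then (φ, ψ) = (0, 1−p) satisfies these equations, so the alternating sequence ..., 0, 1−p, 0, 1−p, ... is a prime period-two solution of w_{n+1} = w_{n-1}/(p + q w_n + w_{n-1}). -/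

import Mathlib

/-!
If `φ` and `ψ` are both nonzero, cancelling them from the period-two equations makes both
denominators equal to `1`; subtracting gives `(q - 1) * (φ - ψ) = 0`, which is excluded. So one of
them vanishes, and the equation for the other, whose denominator is then `p` plus itself, forces
the value `1 - p`.
-/

section

variable {K : Type*} [DivisionRing K] {p q φ ψ : K} {w : ℕ → K}

/-- `w` is a solution of Eq.(8), `w_{n+1} = w_{n-1} / (p + q w_n + w_{n-1})`, with the index shifted
so that `w 0` and `w 1` are the initial values. The denominators are required not to vanish, which
keeps the convention `x / 0 = 0` from playing a role. -/
def IsEq8Solution (p q : K) (w : ℕ → K) : Prop :=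
  ∀ n : ℕ, p + q * w (n + 1) + w n ≠ 0 ∧ w (n + 2) = w n / (p + q * w (n + 1) + w n)

/-- The period-two equations of Eq.(8), including the nonvanishing of both denominators: the
condition on `(φ, ψ)` for `φ, ψ, φ, ψ, ...` to be a solution. The values may coincide, so that
`φ ≠ ψ` is a separate condition of primality of the period. -/
def IsPeriodTwoPair (p q φ ψ : K) : Prop :=
  p + q * ψ + φ ≠ 0 ∧ p + q * φ + ψ ≠ 0 ∧ φ = φ / (p + q * ψ + φ) ∧ ψ = ψ / (p + q * φ + ψ)

theorem isPeriodTwoPair_comm : IsPeriodTwoPair p q φ ψ ↔ IsPeriodTwoPair p q ψ φ := by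
  unfold IsPeriodTwoPair
  tauto

theorem isPeriodTwoPair_zero_one_sub (h : p + q * (1 - p) ≠ 0) :
    IsPeriodTwoPair p q 0 (1 - p) := by
  simpa [IsPeriodTwoPair] using h

namespace IsPeriodTwoPair

theorem denom_eq_one (h : IsPeriodTwoPair p q φ ψ) (hφ : φ ≠ 0) : p + q * ψ + φ = 1 := by
  obtain ⟨hden, -, heq, -⟩ := h
  exact (mul_eq_left₀ hφ).mp ((eq_div_iff hden).mp heq)

theorem eq_zero_or_eq_zero (h : IsPeriodTwoPair p q φ ψ) (hq : q ≠ 1) (hne : φ ≠ ψ) :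
    φ = 0 ∨ ψ = 0 := by
  by_contra! ⟨hφ, hψ⟩
  have hden : p + q * ψ + φ = p + q * φ + ψ :=
    (h.denom_eq_one hφ).trans ((isPeriodTwoPair_comm.mp h).denom_eq_one hψ).symm
  have hprod : (q - 1) * (φ - ψ) = 0 := by
    calc (q - 1) * (φ - ψ) = (p + q * φ + ψ) - (p + q * ψ + φ) := by noncomm_ring
      _ = 0 := sub_eq_zero.mpr hden.symm
  exact mul_ne_zero (sub_ne_zero.mpr hq) (sub_ne_zero.mpr hne) hprod

theorem eq_one_sub_of_zero_left (h : IsPeriodTwoPair p q 0 ψ) (hψ : ψ ≠ 0) : ψ = 1 - p := by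
  have hden : p + q * 0 + ψ = 1 := (isPeriodTwoPair_comm.mp h).denom_eq_one hψ
  rw [mul_zero, add_zero] at hden
  exact eq_sub_of_add_eq' hden

end IsPeriodTwoPair

theorem isPeriodTwoPair_zero_left_iff (hψ : ψ ≠ 0) :
    IsPeriodTwoPair p q 0 ψ ↔ ψ = 1 - p ∧ p + q * (1 - p) ≠ 0 := by
  constructor
  · intro h
    obtain rfl : ψ = 1 - p := h.eq_one_sub_of_zero_left hψ
    exact ⟨rfl, by simpa only [add_zero] using h.1⟩
  · rintro ⟨rfl, h⟩
    exact isPeriodTwoPair_zero_one_sub h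

theorem isPeriodTwoPair_iff (hq : q ≠ 1) (hne : φ ≠ ψ) :
    IsPeriodTwoPair p q φ ψ ↔
      ((φ = 0 ∧ ψ = 1 - p) ∨ (φ = 1 - p ∧ ψ = 0)) ∧ p + q * (1 - p) ≠ 0 := by
  constructor
  · intro h
    rcases h.eq_zero_or_eq_zero hq hne with rfl | rfl
    · obtain ⟨hψ, hden⟩ := (isPeriodTwoPair_zero_left_iff hne.symm).mp h
      exact ⟨.inl ⟨rfl, hψ⟩, hden⟩
    · obtain ⟨hφ, hden⟩ := (isPeriodTwoPair_zero_left_iff hne).mp (isPeriodTwoPair_comm.mp h)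
      exact ⟨.inr ⟨hφ, rfl⟩, hden⟩
  · rintro ⟨⟨rfl, rfl⟩ | ⟨rfl, rfl⟩, h⟩
    · exact isPeriodTwoPair_zero_one_sub h
    · exact isPeriodTwoPair_comm.mp (isPeriodTwoPair_zero_one_sub h)

theorem isEq8Solution_iff_isPeriodTwoPair (hw : ∀ n, w n = if Even n then φ else ψ) :
    IsEq8Solution p q w ↔ IsPeriodTwoPair p q φ ψ := by
  constructor
  · intro h
    have ⟨hφ, eφ⟩ : p + q * ψ + φ ≠ 0 ∧ φ = φ / (p + q * ψ + φ) := by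
      simpa [hw, Nat.even_add_one] using h 0
    have ⟨hψ, eψ⟩ : p + q * φ + ψ ≠ 0 ∧ ψ = ψ / (p + q * φ + ψ) := by
      simpa [hw, Nat.even_add_one] using h 1
    exact ⟨hφ, hψ, eφ, eψ⟩
  · rintro ⟨hφ, hψ, eφ, eψ⟩ n
    by_cases hn : Even n
    · simpa [hw, Nat.even_add_one, hn] using And.intro hφ eφ
    · simpa [hw, Nat.even_add_one, hn] using And.intro hψ eψ

theorem eq8_period_two_general (p q : K) (hq : q ≠ 1) (hp : p ≠ 1) :
    (∀ φ ψ : K, φ ≠ ψ → IsPeriodTwoPair p q φ ψ →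
      ((φ = 0 ∧ ψ = 1 - p) ∨ (φ = 1 - p ∧ ψ = 0)) ∧ p + q * (1 - p) ≠ 0) ∧
    (p + q * (1 - p) ≠ 0 →
      IsPeriodTwoPair p q 0 (1 - p) ∧
      (∀ w : ℕ → K, (∀ n : ℕ, w n = if Even n then 0 else 1 - p) →
        IsEq8Solution p q w ∧ w 0 ≠ w 1)) := by
  refine ⟨fun φ ψ hne => (isPeriodTwoPair_iff hq hne).mp, fun h => ?_⟩
  have hpair : IsPeriodTwoPair p q 0 (1 - p) := isPeriodTwoPair_zero_one_sub h
  refine ⟨hpair, fun w hw => ⟨(isEq8Solution_iff_isPeriodTwoPair hw).mpr hpair, ?_⟩⟩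
  simpa [hw] using (sub_ne_zero.mpr hp.symm).symm

end

/-- for `q ≠ 1`, `p ≠ 1`: any `φ ≠ ψ` with nonvanishing denominators
satisfying `φ = φ/(p + q ψ + φ)` and `ψ = ψ/(p + q φ + ψ)` must be (in some order)
`{0, 1-p}`, and then `p + q(1-p) ≠ 0`.  Conversely, if `p + q(1-p) ≠ 0` then
`(φ, ψ) = (0, 1-p)` satisfies these equations, and the alternating sequence
`..., 0, 1-p, 0, 1-p, ...` is a prime period-two solution of
`w_{n+1} = w_{n-1}/(p + q w_n + w_{n-1})`. -/
theorem eq8_period_two (p q : ℂ) (hq : q ≠ 1) (hp : p ≠ 1) :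
    (∀ φ ψ : ℂ, φ ≠ ψ →
      p + q * ψ + φ ≠ 0 → p + q * φ + ψ ≠ 0 →
      φ = φ / (p + q * ψ + φ) → ψ = ψ / (p + q * φ + ψ) →
      ((φ = 0 ∧ ψ = 1 - p) ∨ (φ = 1 - p ∧ ψ = 0)) ∧ p + q * (1 - p) ≠ 0) ∧
    (p + q * (1 - p) ≠ 0 →
      (p + q * (1 - p) + 0 ≠ 0 ∧ p + q * 0 + (1 - p) ≠ 0 ∧
        (0 : ℂ) = 0 / (p + q * (1 - p) + 0) ∧
        (1 - p : ℂ) = (1 - p) / (p + q * 0 + (1 - p))) ∧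
      (∀ w : ℕ → ℂ, (∀ n : ℕ, w n = if Even n then 0 else 1 - p) →
        (∀ n : ℕ, p + q * w (n + 1) + w n ≠ 0 ∧
          w (n + 2) = w n / (p + q * w (n + 1) + w n)) ∧ w 0 ≠ w 1)) := by
  obtain ⟨hnec, hsuff⟩ := eq8_period_two_general p q hq hp
  exact ⟨fun φ ψ hne hφ hψ eφ eψ => hnec φ ψ hne ⟨hφ, hψ, eφ, eψ⟩, hsuff⟩
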